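/- (Pythagorean relation.) Let I be a finite set, let E = {p ∈ P_+(I) : p(x) = Q_r(x) exp(θᵀF(x))/Z(θ), θ ∈ ℝ^d} be the exponential family with sufficient statistic F: I → ℝ^d and reference measure Q_r ∈ P_+(I), and for P ∈ P(I) let N = {p ∈ P(I) : Σ_{x∈I} F(x)p(x) = Σ_{x∈I} F(x)P(x)} be the orthogonal linear family. If P* ∈ P(I) lies in both N and the closure of E, then for every Q ∈ E and every P ∈ N, D(P‖Q) = D(P‖P*) + D(P*‖Q), where D(p‖q) = Σ_{x∈I} p(x) log(p(x)/q(x)) is the KL divergence. -/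

import Mathlib

open Set

namespace StatRicci

noncomputable section

/-- Kullback–Leibler divergence `D(p‖q) = Σ_x p(x) log(p(x)/q(x))` on a finite set
(with the convention `0·log 0 = 0`, realized via `Real.log 0 = 0`). -/
def DKL {ι : Type*} [Fintype ι] (p q : ι → ℝ) : ℝ :=
  ∑ x, p x * Real.log (p x / q x)

/-- `p` is a probability distribution on `ι`: `p ∈ P(I)`. -/
def isProb {ι : Type*} [Fintype ι] (p : ι → ℝ) : Prop :=
  (∀ x, 0 ≤ p x) ∧ ∑ x, p x = 1

/-- `p` is a strictly positive probability distribution: `p ∈ P₊(I)`. -/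
def isPosProb {ι : Type*} [Fintype ι] (p : ι → ℝ) : Prop :=
  (∀ x, 0 < p x) ∧ ∑ x, p x = 1

/-- The exponential family `E = {p : p(x) = Q_r(x) exp(θᵀF(x))/Z(θ), θ ∈ ℝ^d}` with
sufficient statistic `F` and reference measure `Q_r`. -/
def expFam {ι : Type*} [Fintype ι] {d : ℕ} (Qr : ι → ℝ) (F : ι → Fin d → ℝ) :
    Set (ι → ℝ) :=
  {p | ∃ θ : Fin d → ℝ, ∀ x, p x = Qr x * Real.exp (∑ a, θ a * F x a)
    / ∑ y, Qr y * Real.exp (∑ a, θ a * F y a)}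

/-- The orthogonal linear family
`N = {p ∈ P(I) : Σ_x F(x) p(x) = Σ_x F(x) P(x)}` determined by a target `P`. -/
def linFam {ι : Type*} [Fintype ι] {d : ℕ} (F : ι → Fin d → ℝ) (P : ι → ℝ) :
    Set (ι → ℝ) :=
  {p | isProb p ∧ ∀ a, ∑ x, F x a * p x = ∑ x, F x a * P x}


/-!
Write `H(p, q) = -∑ p log q`, so that `D(p‖q) = H(p, q) - H(p, p)` when `p ≪ q`. The claim then
reads `H(P - P*, Q) = H(P - P*, P*)`. On `E` the function `q ↦ H(P - P*, q)` is constant, because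
`log q` is, up to `log Q_r`, a combination of the constants and of the statistics, all of which
`P - P*` annihilates. Letting `q ∈ E` tend to `P*` gives the claim, once `P ≪ P*` is known: if
`P` charged a zero of `P*`, then `H(P, q)` would tend to `∞` while `H(P*, q)` stays bounded.
-/

section

open Filter Topology

variable {ι : Type*} [Fintype ι]

/-- The cross entropy `H(p, q) = -∑ p log q`. It is linear in `p`, which is allowed to be a signed
measure; terms with `q x = 0` count as `0` because `Real.log 0 = 0`. -/
def crossEntropy (p q : ι → ℝ) : ℝ :=
  -∑ x, p x * Real.log (q x)

lemma crossEntropy_sub (p p' q : ι → ℝ) :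
    crossEntropy (p - p') q = crossEntropy p q - crossEntropy p' q := by
  simp only [crossEntropy, Pi.sub_apply, sub_mul, Finset.sum_sub_distrib]
  ring

lemma DKL_eq_crossEntropy_sub {p q : ι → ℝ} (hpq : ∀ x, q x = 0 → p x = 0) :
    DKL p q = crossEntropy p q - crossEntropy p p := by
  have log_ratio (x : ι) :
      p x * Real.log (p x / q x) = p x * Real.log (p x) - p x * Real.log (q x) := by
    rcases eq_or_ne (p x) 0 with hp | hp
    · simp [hp]
    · rw [Real.log_div hp (mt (hpq x) hp), mul_sub]
  simp only [DKL, crossEntropy, log_ratio, Finset.sum_sub_distrib]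
  ring

lemma continuousAt_crossEntropy {p r : ι → ℝ} (hpr : ∀ x, r x = 0 → p x = 0) :
    ContinuousAt (crossEntropy p) r := by
  refine (tendsto_finsetSum _ fun x _ => ?_).neg
  rcases eq_or_ne (p x) 0 with hp | hp
  · simp [hp]
  · exact ((continuousAt_apply x r).log (mt (hpr x) hp)).const_mul _

lemma tendsto_crossEntropy_atTop {p r : ι → ℝ} (hp : ∀ x, 0 ≤ p x) {x : ι} (hpx : p x ≠ 0)
    (hrx : r x = 0) :
    Tendsto (crossEntropy p) (𝓝[{q | ∀ y, 0 < q y}] r) atTop := by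
  have tendsto_coord : Tendsto (fun q : ι → ℝ => q x) (𝓝[{q | ∀ y, 0 < q y}] r) (𝓝[>] 0) :=
    tendsto_nhdsWithin_iff.2
      ⟨hrx ▸ (continuousAt_apply x r).mono_left nhdsWithin_le_nhds,
        eventually_mem_nhdsWithin.mono fun q hq => hq x⟩
  have tendsto_term : Tendsto (fun q : ι → ℝ => p x * -Real.log (q x))
      (𝓝[{q | ∀ y, 0 < q y}] r) atTop :=
    (tendsto_neg_atBot_atTop.comp (Real.tendsto_log_nhdsGT_zero.comp tendsto_coord)).const_mul_atTop
      ((hp x).lt_of_ne' hpx)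
  have tendsto_sum : Tendsto (fun q : ι → ℝ => -∑ y, p y * q y)
      (𝓝[{q | ∀ y, 0 < q y}] r) (𝓝 (-∑ y, p y * r y)) :=
    (by fun_prop : Continuous fun q : ι → ℝ => -∑ y, p y * q y).continuousAt.mono_left
      nhdsWithin_le_nhds
  refine tendsto_atTop_mono' _ ?_ (tendsto_term.atTop_add tendsto_sum)
  filter_upwards [self_mem_nhdsWithin] with q hq
  -- As `log t ≤ t`, all the terms `p y * (q y - log (q y))` are nonnegative.
  have single_le : p x * (q x - Real.log (q x)) ≤ ∑ y, p y * (q y - Real.log (q y)) :=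
    Finset.single_le_sum (f := fun y => p y * (q y - Real.log (q y)))
      (fun y _ => mul_nonneg (hp y) (sub_nonneg.2 (Real.log_le_self (hq y).le)))
      (Finset.mem_univ x)
  have term_nonneg : 0 ≤ p x * q x := mul_nonneg (hp x) (hq x).le
  simp only [mul_sub, Finset.sum_sub_distrib] at single_le
  simp only [crossEntropy]
  linarith

section ExpFam

variable {d : ℕ} {F : ι → Fin d → ℝ} {Qr q : ι → ℝ}

lemma exists_eq_mul_exp_of_mem_expFam (hQr : ∀ x, 0 < Qr x) (hq : q ∈ expFam Qr F) :
    ∃ (θ : Fin d → ℝ) (c : ℝ), ∀ x, q x = Qr x * Real.exp (∑ a, θ a * F x a - c) := by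
  obtain ⟨θ, hθ⟩ := hq
  refine ⟨θ, Real.log (∑ y, Qr y * Real.exp (∑ a, θ a * F y a)), fun x => ?_⟩
  have Z_pos : 0 < ∑ y, Qr y * Real.exp (∑ a, θ a * F y a) :=
    Finset.sum_pos (fun y _ => mul_pos (hQr y) (Real.exp_pos _)) ⟨x, Finset.mem_univ x⟩
  rw [hθ, Real.exp_sub, Real.exp_log Z_pos, mul_div_assoc]

lemma pos_of_mem_expFam (hQr : ∀ x, 0 < Qr x) (hq : q ∈ expFam Qr F) (x : ι) : 0 < q x := by
  obtain ⟨_, _, h⟩ := exists_eq_mul_exp_of_mem_expFam hQr hq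
  rw [h]
  exact mul_pos (hQr x) (Real.exp_pos _)

lemma crossEntropy_eq_of_mem_expFam (hQr : ∀ x, 0 < Qr x) (hq : q ∈ expFam Qr F) {v : ι → ℝ}
    (hv : ∑ x, v x = 0) (hFv : ∀ a, ∑ x, F x a * v x = 0) :
    crossEntropy v q = crossEntropy v Qr := by
  obtain ⟨θ, c, hθ⟩ := exists_eq_mul_exp_of_mem_expFam hQr hq
  have log_eq (x : ι) : Real.log (q x) = Real.log (Qr x) + (∑ a, θ a * F x a - c) := by
    rw [hθ, Real.log_mul (hQr x).ne' (Real.exp_ne_zero _), Real.log_exp]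
  have sum_statistic : ∑ x, v x * ∑ a, θ a * F x a = 0 :=
    calc ∑ x, v x * ∑ a, θ a * F x a
        = ∑ a, θ a * ∑ x, F x a * v x := by
          simp only [Finset.mul_sum]
          rw [Finset.sum_comm]
          exact Finset.sum_congr rfl fun a _ => Finset.sum_congr rfl fun x _ => by ring
      _ = 0 := by simp only [hFv, mul_zero, Finset.sum_const_zero]
  simp only [crossEntropy, log_eq, mul_add, mul_sub, Finset.sum_add_distrib,
    Finset.sum_sub_distrib, ← Finset.sum_mul, hv, sum_statistic, zero_mul, sub_zero, add_zero]

lemma crossEntropy_sub_eq_of_mem_linFam (hQr : ∀ x, 0 < Qr x) (hq : q ∈ expFam Qr F)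
    {P₀ P P' : ι → ℝ} (hP : P ∈ linFam F P₀) (hP' : P' ∈ linFam F P₀) :
    crossEntropy (P - P') q = crossEntropy (P - P') Qr := by
  refine crossEntropy_eq_of_mem_expFam hQr hq ?_ fun a => ?_
  · simp only [Pi.sub_apply, Finset.sum_sub_distrib, hP.1.2, hP'.1.2, sub_self]
  · simp only [Pi.sub_apply, mul_sub, Finset.sum_sub_distrib, hP.2 a, hP'.2 a, sub_self]

end ExpFam

theorem pythagorean_relation_general {E : Set (ι → ℝ)} (hE : E ⊆ {q | ∀ x, 0 < q x})
    {P Pstar : ι → ℝ} (hP : ∀ x, 0 ≤ P x) (hstar : Pstar ∈ closure E)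
    (horth : ∀ q ∈ E, ∀ q' ∈ E, crossEntropy (P - Pstar) q = crossEntropy (P - Pstar) q')
    {Q : ι → ℝ} (hQ : Q ∈ E) :
    DKL P Q = DKL P Pstar + DKL Pstar Q := by
  have : (𝓝[E] Pstar).NeBot := mem_closure_iff_nhdsWithin_neBot.1 hstar
  have tendsto_star : Tendsto (crossEntropy Pstar) (𝓝[E] Pstar)
      (𝓝 (crossEntropy Pstar Pstar)) :=
    (continuousAt_crossEntropy fun _ => id).mono_left nhdsWithin_le_nhds
  have tendsto_P : Tendsto (crossEntropy P) (𝓝[E] Pstar)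
      (𝓝 (crossEntropy Pstar Pstar + crossEntropy (P - Pstar) Q)) := by
    refine (tendsto_star.add_const _).congr' ?_
    filter_upwards [self_mem_nhdsWithin] with q hq
    rw [horth Q hQ q hq, crossEntropy_sub, add_sub_cancel]
  have abs_cont : ∀ x, Pstar x = 0 → P x = 0 := by
    intro x hx
    by_contra hPx
    exact not_tendsto_nhds_of_tendsto_atTop
      ((tendsto_crossEntropy_atTop hP hPx hx).mono_left (nhdsWithin_mono _ hE)) _ tendsto_P
  have crossEntropy_limit : crossEntropy P Pstar =
      crossEntropy Pstar Pstar + crossEntropy (P - Pstar) Q :=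
    tendsto_nhds_unique ((continuousAt_crossEntropy abs_cont).mono_left nhdsWithin_le_nhds)
      tendsto_P
  have Q_ne_zero (x : ι) : Q x ≠ 0 := (hE hQ x).ne'
  rw [DKL_eq_crossEntropy_sub fun x hx => absurd hx (Q_ne_zero x),
    DKL_eq_crossEntropy_sub abs_cont, DKL_eq_crossEntropy_sub fun x hx => absurd hx (Q_ne_zero x),
    crossEntropy_limit, crossEntropy_sub]
  ring

end

/-- **Pythagorean relation.** If `P*` lies in both the orthogonal linear
family `N` and the closure of the exponential family `E`, then for every `Q ∈ E` and
every `P ∈ N`: `D(P‖Q) = D(P‖P*) + D(P*‖Q)`. -/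
theorem pythagorean_relation {ι : Type*} [Fintype ι] {d : ℕ}
    (F : ι → Fin d → ℝ) (Qr : ι → ℝ) (hQr : isPosProb Qr)
    (P0 : ι → ℝ) (hP0 : isProb P0)
    (Pstar : ι → ℝ)
    (hstar : Pstar ∈ linFam F P0 ∩ closure (expFam Qr F)) :
    ∀ Q ∈ expFam Qr F, ∀ P ∈ linFam F P0,
      DKL P Q = DKL P Pstar + DKL Pstar Q := by
  intro Q hQ P hP
  have horth (q) (hq : q ∈ expFam Qr F) :
      crossEntropy (P - Pstar) q = crossEntropy (P - Pstar) Qr :=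
    crossEntropy_sub_eq_of_mem_linFam hQr.1 hq hP hstar.1
  exact pythagorean_relation_general (fun _ => pos_of_mem_expFam hQr.1) hP.1.1 hstar.2
    (fun q hq q' hq' => (horth q hq).trans (horth q' hq').symm) hQ

end
end StatRicci
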